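/- Multidimensional thinning-trick limit theorem: Let X^(n) = (X_1^(n),...,X_s^(n)) be random vectors with N_0-valued components and p_r^(n) ∈ [0,1] deterministic with p_r^(n) → 0. Suppose (p_1^(n)⊙X_1^(n),...,p_s^(n)⊙X_s^(n)) converges in distribution to Z = (Z_1,...,Z_s), where Z has a multivariate mixed Poisson distribution with mixing vector Y = (Y_1,...,Y_s) (i.e. Z_r = N_r(Y_r) for independent unit-rate Poisson processes N_r independent of Y), and that sup_n p_r^(n) E[X_r^(n)] < ∞ for each r. Then (p_1^(n) X_1^(n),...,p_s^(n) X_s^(n)) converges in distribution to Y. -/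

import Mathlib

open MeasureTheory ProbabilityTheory Finset

open Filter
open scoped NNReal Topology BoundedContinuousFunction Matrix

/-!
At `1 - t` the generating function of the mixed Poisson vector `Z` is the Laplace transform of `Y`
at `t`, while the generating function of the thinned vector is `E[∏ r, (1 - p r * t r) ^ X r]`.
Since `|(1 - a) ^ k - exp (-a k)| ≤ a` uniformly in `k`, the latter differs from the Laplace
transform of `(p r * X r)_r` at `t` by at most `∑ r, p r * t r → 0`. Hence the Laplace transforms of
the rescaled vectors converge to that of `Y` for all small `t`. This forces tightness and, a Laplace
transform being analytic along rays and so determined near `0`, convergence in distribution.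
-/

section Mgf

variable {α β : Type*} [MeasurableSpace α] [MeasurableSpace β] {μ : Measure α} {ν : Measure β}
  [IsFiniteMeasure μ] [IsFiniteMeasure ν] {X : α → ℝ} {X' : β → ℝ}

lemma Iio_zero_subset_interior_integrableExpSet (hX : AEMeasurable X μ) (hX0 : 0 ≤ X) :
    Set.Iio 0 ⊆ interior (integrableExpSet X μ) := by
  refine interior_maximal (fun t ht => ?_) isOpen_Iio
  refine Integrable.of_bound (by fun_prop) 1 (.of_forall fun ω => ?_)
  simpa using mul_nonpos_of_nonpos_of_nonneg (le_of_lt ht) (hX0 ω)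

lemma mgf_eqOn_Iio_zero (hX : AEMeasurable X μ) (hX0 : 0 ≤ X) (hX' : AEMeasurable X' ν)
    (hX'0 : 0 ≤ X') (h : mgf X μ =ᶠ[𝓝[<] 0] mgf X' ν) :
    Set.EqOn (mgf X μ) (mgf X' ν) (Set.Iio 0) := by
  obtain ⟨t, ht, ht0⟩ :=
    ((eventually_eventually_nhdsWithin.2 h).and self_mem_nhdsWithin).exists
  rw [isOpen_Iio.nhdsWithin_eq ht0] at ht
  exact (analyticOnNhd_mgf.mono (Iio_zero_subset_interior_integrableExpSet hX hX0))
    |>.eqOn_of_preconnected_of_eventuallyEq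
      (analyticOnNhd_mgf.mono (Iio_zero_subset_interior_integrableExpSet hX' hX'0))
      isPreconnected_Iio ht0 ht

end Mgf

section Laplace

variable {ι : Type*} [Fintype ι]

/-- The bounded continuous function `x ↦ exp (-⟨t, x⟩)` on the orthant `ι → ℝ≥0`. -/
noncomputable def expNegDot (t : ι → ℝ≥0) : (ι → ℝ≥0) →ᵇ ℝ :=
  .ofNormedAddCommGroup (fun x => Real.exp (-(t ⬝ᵥ x : ℝ≥0))) (by fun_prop) 1 fun x => by
    simp [Real.abs_exp]

@[simp]
lemma expNegDot_apply (t x : ι → ℝ≥0) : expNegDot t x = Real.exp (-(t ⬝ᵥ x : ℝ≥0)) := rfl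

lemma expNegDot_zero : expNegDot (0 : ι → ℝ≥0) = 1 := by
  ext x
  simp

lemma expNegDot_add (t t' : ι → ℝ≥0) : expNegDot (t + t') = expNegDot t * expNegDot t' := by
  ext x
  simp [add_dotProduct, ← Real.exp_add, add_comm]

/-- Laplace transform of a measure on the orthant `ι → ℝ≥0`. -/
noncomputable def laplaceTransform (ν : Measure (ι → ℝ≥0)) (t : ι → ℝ≥0) : ℝ :=
  ∫ x, expNegDot t x ∂ν

/-- The exponentials `expNegDot t` bundled as a monoid homomorphism in `t`; its range being closed
under multiplication, it spans the algebra it generates. -/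
noncomputable def expNegDotHom : Multiplicative (ι → ℝ≥0) →* ((ι → ℝ≥0) →ᵇ ℝ) where
  toFun t := expNegDot t.toAdd
  map_one' := expNegDot_zero
  map_mul' t t' := expNegDot_add t.toAdd t'.toAdd

/-- The algebra generated by the functions `expNegDot t`, to which the Stone–Weierstrass theorem is
applied; the star operation is trivial. -/
noncomputable def expNegDotAlgebra (ι : Type*) [Fintype ι] :
    StarSubalgebra ℝ ((ι → ℝ≥0) →ᵇ ℝ) where
  toSubalgebra := Algebra.adjoin ℝ (Set.range expNegDot)
  star_mem' hf := hf

lemma mem_expNegDotAlgebra {f : (ι → ℝ≥0) →ᵇ ℝ} :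
    f ∈ expNegDotAlgebra ι ↔ f ∈ Submodule.span ℝ (Set.range expNegDot) := by
  have h : Set.range expNegDot =
      (MonoidHom.mrange (expNegDotHom (ι := ι)) : Set ((ι → ℝ≥0) →ᵇ ℝ)) := rfl
  change f ∈ Subalgebra.toSubmodule (Algebra.adjoin ℝ (Set.range expNegDot)) ↔ _
  rw [Algebra.adjoin_eq_span, h, Submonoid.closure_eq]

lemma separatesPoints_expNegDotAlgebra :
    ((expNegDotAlgebra ι).map
      (BoundedContinuousFunction.toContinuousMapStarₐ ℝ)).SeparatesPoints := by
  classical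
  intro x y hxy
  obtain ⟨r, hr⟩ := Function.ne_iff.1 hxy
  refine ⟨_, ⟨_, ⟨expNegDot (Pi.single r 1), Algebra.subset_adjoin ⟨_, rfl⟩, rfl⟩, rfl⟩, ?_⟩
  simpa using hr

theorem ext_of_laplaceTransform {ν ν' : Measure (ι → ℝ≥0)} [IsFiniteMeasure ν]
    [IsFiniteMeasure ν'] (h : laplaceTransform ν = laplaceTransform ν') : ν = ν' := by
  refine ext_of_forall_mem_subalgebra_integral_eq_of_polish separatesPoints_expNegDotAlgebra
    fun g hg => ?_
  induction mem_expNegDotAlgebra.1 hg using Submodule.span_induction with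
  | mem f hf =>
    obtain ⟨t, rfl⟩ := hf
    exact congrFun h t
  | zero => simp
  | add f g hf hg ihf ihg =>
    simp only [BoundedContinuousFunction.coe_add, Pi.add_apply]
    rw [integral_add (f.integrable ν) (g.integrable ν),
      integral_add (f.integrable ν') (g.integrable ν')]
    simp_all [mem_expNegDotAlgebra]
  | smul c f hf ih => simp_all [mem_expNegDotAlgebra, integral_const_mul]

lemma mgf_dotProduct_neg (ν : Measure (ι → ℝ≥0)) (t : ι → ℝ≥0) (c : ℝ≥0) :
    mgf (fun x => ((t ⬝ᵥ x : ℝ≥0) : ℝ)) ν (-c) = laplaceTransform ν (c • t) := by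
  simp [mgf, laplaceTransform]

-- Along each ray the Laplace transform is a moment generating function, hence analytic.
theorem laplaceTransform_eq_of_eventuallyEq {ν ν' : Measure (ι → ℝ≥0)} [IsFiniteMeasure ν]
    [IsFiniteMeasure ν'] (h : laplaceTransform ν =ᶠ[𝓝 0] laplaceTransform ν') :
    laplaceTransform ν = laplaceTransform ν' := by
  ext t
  have hmeas : Measurable fun x : ι → ℝ≥0 => ((t ⬝ᵥ x : ℝ≥0) : ℝ) := by fun_prop
  have hnonneg : (0 : (ι → ℝ≥0) → ℝ) ≤ fun x => ((t ⬝ᵥ x : ℝ≥0) : ℝ) :=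
    fun x => NNReal.coe_nonneg _
  have hray : Tendsto (fun c : ℝ => (-c).toNNReal • t) (𝓝[<] 0) (𝓝 0) := by
    refine tendsto_nhdsWithin_of_tendsto_nhds ?_
    exact (by fun_prop : Continuous fun c : ℝ => (-c).toNNReal • t).tendsto' _ _ (by simp)
  have hmgf := mgf_eqOn_Iio_zero (μ := ν) (ν := ν') hmeas.aemeasurable hnonneg
    hmeas.aemeasurable hnonneg <| by
      filter_upwards [hray.eventually h, self_mem_nhdsWithin] with c hc hc0
      simpa [← mgf_dotProduct_neg, Real.coe_toNNReal _ (neg_nonneg.2 (le_of_lt hc0))] using hc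
  have key := hmgf (x := -(1 : ℝ≥0)) (by simp)
  rwa [mgf_dotProduct_neg, mgf_dotProduct_neg, one_smul] at key

lemma continuous_laplaceTransform (ν : Measure (ι → ℝ≥0)) [IsFiniteMeasure ν] :
    Continuous (laplaceTransform ν) := by
  refine continuous_of_dominated (bound := fun _ => 1)
    (fun t => (expNegDot t).continuous.aestronglyMeasurable) (fun t => .of_forall fun x => ?_)
    (integrable_const 1) (.of_forall fun x => ?_)
  · simp [Real.abs_exp]
  · simp only [expNegDot_apply]
    fun_prop

@[simp]
lemma laplaceTransform_zero (ν : Measure (ι → ℝ≥0)) [IsProbabilityMeasure ν] :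
    laplaceTransform ν 0 = 1 := by
  simp [laplaceTransform]

lemma expNegDot_le_half {c : ℝ≥0} (hc : 0 < c) {x : ι → ℝ≥0}
    (hx : x ∈ (Metric.closedBall 0 (c⁻¹ : ℝ))ᶜ) : expNegDot (fun _ => c) x ≤ 1 / 2 := by
  obtain ⟨r, hr⟩ : ∃ r, c⁻¹ < x r := by
    by_contra! h
    refine hx <| (dist_pi_le_iff (by positivity)).2 fun r => ?_
    simpa [NNReal.dist_eq] using NNReal.coe_le_coe.2 (h r)
  have hdot : 1 ≤ (fun _ => c) ⬝ᵥ x := calc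
    1 = c * c⁻¹ := (mul_inv_cancel₀ hc.ne').symm
    _ ≤ c * x r := by gcongr
    _ ≤ (fun _ => c) ⬝ᵥ x := single_le_sum (f := fun r => c * x r) (fun _ _ => zero_le)
      (mem_univ r)
  calc expNegDot (fun _ => c) x ≤ Real.exp (-1) := Real.exp_le_exp.2 (neg_le_neg (mod_cast hdot))
    _ ≤ 1 / 2 := by linarith [Real.exp_neg_one_lt_d9]

lemma measure_compl_closedBall_le (ν : Measure (ι → ℝ≥0)) [IsProbabilityMeasure ν] {c : ℝ≥0}
    (hc : 0 < c) :
    ν (Metric.closedBall 0 (c⁻¹ : ℝ))ᶜ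
      ≤ ENNReal.ofReal (2 * (1 - laplaceTransform ν fun _ => c)) := by
  have hint : Integrable (expNegDot fun _ : ι => c) ν := (expNegDot _).integrable ν
  have hmarkov := mul_meas_ge_le_integral_of_nonneg (μ := ν)
    (f := fun x => 1 - expNegDot (fun _ => c) x)
    (.of_forall fun x => by simp) ((integrable_const 1).sub hint) (1 / 2)
  rw [integral_sub (integrable_const 1) hint, integral_const, probReal_univ, one_smul] at hmarkov
  have hsub : (Metric.closedBall 0 (c⁻¹ : ℝ))ᶜ ⊆ {x | 1 / 2 ≤ 1 - expNegDot (fun _ : ι => c) x} :=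
    fun x hx => by
      have := expNegDot_le_half hc hx
      rw [Set.mem_ofPred_eq]
      linarith
  refine (measure_mono hsub).trans ?_
  rw [← ofReal_measureReal]
  refine ENNReal.ofReal_le_ofReal ?_
  rw [laplaceTransform]
  linarith

theorem isTightMeasureSet_range_of_tendsto_laplaceTransform {ν : ℕ → Measure (ι → ℝ≥0)}
    [∀ n, IsProbabilityMeasure (ν n)] {ν₀ : Measure (ι → ℝ≥0)} [IsProbabilityMeasure ν₀]
    (h : ∀ᶠ t in 𝓝 0,
      Tendsto (fun n => laplaceTransform (ν n) t) atTop (𝓝 (laplaceTransform ν₀ t))) :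
    IsTightMeasureSet (Set.range ν) := by
  have hball (n : ℕ) : Tendsto (fun R : ℝ => ν n (Metric.closedBall 0 R)ᶜ) atTop (𝓝 0) := by
    simpa using tendsto_measure_compl_closedBall_of_isTightMeasureSet
      (isTightMeasureSet_singleton (μ := ν n)) 0
  have hconst : Tendsto (fun R : ℝ => fun _ : ι => (R⁻¹).toNNReal) atTop (𝓝 0) :=
    tendsto_pi_nhds.2 fun _ => by simpa using tendsto_real_toNNReal tendsto_inv_atTop_zero
  have hbound : Tendsto (fun R : ℝ => ENNReal.ofReal
      (2 * (1 - laplaceTransform ν₀ fun _ => (R⁻¹).toNNReal))) atTop (𝓝 0) := by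
    have := ((continuous_laplaceTransform ν₀).tendsto 0).comp hconst
    simpa using! ENNReal.tendsto_ofReal ((this.const_sub 1).const_mul 2)
  have hlimsup : Tendsto (fun R : ℝ => limsup (fun n => ν n (Metric.closedBall 0 R)ᶜ) atTop)
      atTop (𝓝 0) := by
    refine tendsto_of_tendsto_of_tendsto_of_le_of_le' tendsto_const_nhds hbound
      (.of_forall fun _ => zero_le) ?_
    filter_upwards [hconst.eventually h, eventually_gt_atTop 0] with R hR hR0
    have hlim := ENNReal.tendsto_ofReal ((hR.const_sub 1).const_mul 2)
    refine (limsup_le_limsup (.of_forall fun n => ?_)).trans_eq hlim.limsup_eq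
    have hpos : 0 < (R⁻¹).toNNReal := by simpa
    simpa [hR0.le] using measure_compl_closedBall_le (ν n) hpos
  refine isTightMeasureSet_of_tendsto_measure_compl_closedBall (x := 0) ?_
  simp_rw [iSup_range]
  exact Nat.tendsto_iSup_of_tendsto_limsup hball hlimsup fun n R R' hRR' => by gcongr

theorem tendsto_of_tendsto_laplaceTransform {ν : ℕ → ProbabilityMeasure (ι → ℝ≥0)}
    {ν₀ : ProbabilityMeasure (ι → ℝ≥0)}
    (h : ∀ᶠ t in 𝓝 0, Tendsto (fun n => laplaceTransform (ν n : Measure (ι → ℝ≥0)) t) atTop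
      (𝓝 (laplaceTransform (ν₀ : Measure (ι → ℝ≥0)) t))) :
    Tendsto ν atTop (𝓝 ν₀) := by
  have hcompact : IsCompact (closure (Set.range ν)) := by
    refine isCompact_closure_of_isTightMeasureSet ?_
    simpa [Set.range] using isTightMeasureSet_range_of_tendsto_laplaceTransform h
  refine (tendsto_iff_ultrafilter _ _ _).2 fun U hU => ?_
  obtain ⟨ν', -, hν' : Tendsto ν U (𝓝 ν')⟩ := hcompact.ultrafilter_le_nhds (U.map ν)
    (.trans (by simp) (monotone_principal subset_closure))
  suffices hlaplace : laplaceTransform (ν' : Measure (ι → ℝ≥0))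
      =ᶠ[𝓝 0] laplaceTransform (ν₀ : Measure (ι → ℝ≥0)) by
    have heq : (ν' : Measure (ι → ℝ≥0)) = ν₀ :=
      ext_of_laplaceTransform (laplaceTransform_eq_of_eventuallyEq hlaplace)
    rwa [Subtype.ext heq] at hν'
  filter_upwards [h] with t ht
  exact tendsto_nhds_unique
    (ProbabilityMeasure.tendsto_iff_forall_integral_tendsto.1 hν' (expNegDot t)) (ht.comp hU)

end Laplace

section RandomVector

variable {ι Ω : Type*} [Fintype ι] [MeasurableSpace Ω] {μ : Measure Ω}

lemma laplaceTransform_map {W : ι → Ω → ℝ≥0} (hW : ∀ r, Measurable (W r)) (t : ι → ℝ≥0) :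
    laplaceTransform (μ.map fun ω r => W r ω) t
      = ∫ ω, Real.exp (-∑ r, (t r : ℝ) * W r ω) ∂μ := by
  rw [laplaceTransform, integral_map (by fun_prop) (expNegDot t).continuous.aestronglyMeasurable]
  simp [dotProduct]

theorem tendsto_integral_comp_of_tendsto_integral_exp [IsProbabilityMeasure μ]
    {W : ℕ → ι → Ω → ℝ} (hW : ∀ n r, Measurable (W n r)) (hW0 : ∀ n r ω, 0 ≤ W n r ω)
    {V : ι → Ω → ℝ} (hV : ∀ r, Measurable (V r)) (hV0 : ∀ r ω, 0 ≤ V r ω)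
    (h : ∀ᶠ t : ι → ℝ≥0 in 𝓝 0, Tendsto (fun n => ∫ ω, Real.exp (-∑ r, t r * W n r ω) ∂μ) atTop
      (𝓝 (∫ ω, Real.exp (-∑ r, t r * V r ω) ∂μ)))
    (g : (ι → ℝ) →ᵇ ℝ) :
    Tendsto (fun n => ∫ ω, g (fun r => W n r ω) ∂μ) atTop (𝓝 (∫ ω, g (fun r => V r ω) ∂μ)) := by
  lift W to ℕ → ι → Ω → ℝ≥0 using hW0
  lift V to ι → Ω → ℝ≥0 using hV0
  simp only [measurable_coe_nnreal_real_iff] at hW hV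
  simp_rw [← laplaceTransform_map (hW _), ← laplaceTransform_map hV] at h
  let law (U : ι → Ω → ℝ≥0) (hU : ∀ r, Measurable (U r)) : ProbabilityMeasure (ι → ℝ≥0) :=
    ⟨μ.map fun ω r => U r ω, Measure.isProbabilityMeasure_map (by fun_prop)⟩
  have hlaw : Tendsto (fun n => law (W n) (hW n)) atTop (𝓝 (law V hV)) :=
    tendsto_of_tendsto_laplaceTransform h
  let g' : (ι → ℝ≥0) →ᵇ ℝ := g.compContinuous ⟨fun x r => (x r : ℝ), by fun_prop⟩
  have hmap {U : ι → Ω → ℝ≥0} (hU : ∀ r, Measurable (U r)) :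
      ∫ x, g' x ∂(law U hU : Measure (ι → ℝ≥0)) = ∫ ω, g (fun r => U r ω) ∂μ :=
    integral_map (by fun_prop) g'.continuous.aestronglyMeasurable
  simp_rw [← hmap (hW _), ← hmap hV]
  exact ProbabilityMeasure.tendsto_iff_forall_integral_tendsto.1 hlaw g'

end RandomVector

section Poisson

variable {ι Ω : Type*} [Fintype ι] [MeasurableSpace Ω] {μ : Measure Ω}

/-- The Markov kernel sending a vector of rates to the law of a vector of independent Poisson
variables with these rates. -/
noncomputable def poissonPiKernel (ι : Type*) [Fintype ι] : Kernel (ι → ℝ≥0) (ι → ℕ) where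
  toFun y := Measure.pi fun r => poissonMeasure (y r)
  measurable' := by
    classical
    refine Measure.measurable_of_measurable_coe _ fun A _ => ?_
    simp_rw [← Measure.tsum_indicator_apply_singleton _ A (Set.to_countable A).measurableSet,
      Set.indicator_apply, Measure.pi_singleton, poissonMeasure_singleton]
    exact .tsum fun k => .ite (.const _) (by fun_prop) measurable_const

lemma poissonPiKernel_apply (y : ι → ℝ≥0) :
    poissonPiKernel ι y = Measure.pi fun r => poissonMeasure (y r) := rfl

instance : IsMarkovKernel (poissonPiKernel ι) :=
  ⟨fun y => by rw [poissonPiKernel_apply]; infer_instance⟩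

lemma poissonPiKernel_real_singleton (y : ι → ℝ≥0) (k : ι → ℕ) :
    (poissonPiKernel ι y).real {k}
      = ∏ r, Real.exp (-(y r)) * y r ^ k r / (Nat.factorial (k r) : ℝ) := by
  simp_rw [poissonPiKernel_apply, measureReal_def, Measure.pi_singleton, ENNReal.toReal_prod,
    ← measureReal_def, poissonMeasure_real_singleton]

lemma integral_pow_poissonMeasure (y : ℝ≥0) (u : ℝ) :
    ∫ k, u ^ k ∂poissonMeasure y = Real.exp (-((1 - u) * y)) := by
  have hsum := (NormedSpace.expSeries_div_hasSum_exp (y * u : ℝ)).mul_left (Real.exp (-y))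
  rw [← Real.exp_eq_exp_ℝ, ← Real.exp_add] at hsum
  rw [integral_poissonMeasure, show -((1 - u) * y) = -y + y * u by ring, ← hsum.tsum_eq]
  refine tsum_congr fun k => ?_
  rw [smul_eq_mul]
  ring

lemma integral_prod_pow_poissonPiKernel (y : ι → ℝ≥0) (u : ι → ℝ) :
    ∫ k, ∏ r, u r ^ k r ∂poissonPiKernel ι y = Real.exp (-∑ r, (1 - u r) * y r) := by
  rw [poissonPiKernel_apply,
    integral_fintype_prod_eq_prod (f := fun r (k : ℕ) => u r ^ k),
    ← sum_neg_distrib, Real.exp_sum]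
  exact prod_congr rfl fun r _ => integral_pow_poissonMeasure (y r) (u r)

/-- `Z` has the multivariate mixed Poisson distribution with mixing vector `Y`, encoded by its
joint probability mass function. -/
def IsMixedPoisson (μ : Measure Ω) (Y : ι → Ω → ℝ) (Z : ι → Ω → ℕ) : Prop :=
  ∀ k : ι → ℕ, μ {ω | ∀ r, Z r ω = k r}
    = ENNReal.ofReal (∫ ω, ∏ r,
        Real.exp (-(Y r ω)) * (Y r ω) ^ (k r) / (Nat.factorial (k r) : ℝ) ∂μ)

lemma IsMixedPoisson.map_eq [IsFiniteMeasure μ] {Y : ι → Ω → ℝ≥0}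
    {Z : ι → Ω → ℕ} (hY : ∀ r, Measurable (Y r)) (hZ : ∀ r, Measurable (Z r))
    (h : IsMixedPoisson μ (fun r ω => (Y r ω : ℝ)) Z) :
    μ.map (fun ω r => Z r ω) = poissonPiKernel ι ∘ₘ μ.map fun ω r => Y r ω := by
  refine Measure.ext_of_singleton fun k => ?_
  have hset : (fun ω r => Z r ω) ⁻¹' {k} = {ω | ∀ r, Z r ω = k r} := by
    ext ω
    simp [funext_iff]
  have hmeas : Measurable fun y => poissonPiKernel ι y {k} :=
    Kernel.measurable_coe _ (measurableSet_singleton k)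
  rw [Measure.map_apply (by fun_prop) (measurableSet_singleton k), hset, h k,
    ← ENNReal.ofReal_toReal (measure_ne_top (poissonPiKernel ι ∘ₘ _) {k}),
    Measure.bind_apply (measurableSet_singleton k) (Kernel.aemeasurable _),
    ← integral_toReal hmeas.aemeasurable (.of_forall fun ω => measure_lt_top _ _),
    integral_map (by fun_prop) hmeas.ennreal_toReal.aestronglyMeasurable]
  simp_rw [← measureReal_def, poissonPiKernel_real_singleton]

lemma IsMixedPoisson.integral_prod_pow [IsFiniteMeasure μ] {Y : ι → Ω → ℝ}
    {Z : ι → Ω → ℕ} (hY : ∀ r, Measurable (Y r)) (hY0 : ∀ r ω, 0 ≤ Y r ω)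
    (hZ : ∀ r, Measurable (Z r)) (h : IsMixedPoisson μ Y Z) {u : ι → ℝ}
    (hu : ∀ r, u r ∈ Set.Icc 0 1) :
    ∫ ω, ∏ r, u r ^ Z r ω ∂μ = ∫ ω, Real.exp (-∑ r, (1 - u r) * Y r ω) ∂μ := by
  lift Y to ι → Ω → ℝ≥0 using hY0
  simp only [measurable_coe_nnreal_real_iff] at hY
  calc ∫ ω, ∏ r, u r ^ Z r ω ∂μ
      = ∫ k, ∏ r, u r ^ k r ∂(poissonPiKernel ι ∘ₘ μ.map fun ω r => Y r ω) := by
        rw [← h.map_eq hY hZ, integral_map (by fun_prop) .of_discrete]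
    _ = ∫ y, ∫ k, ∏ r, u r ^ k r ∂poissonPiKernel ι y ∂μ.map fun ω r => Y r ω := by
        rw [Measure.comp_eq_comp_const_apply, Kernel.integral_comp, Kernel.const_apply]
        refine .of_bound .of_discrete 1 (.of_forall fun k => ?_)
        rw [norm_prod]
        exact prod_le_one (fun _ _ => norm_nonneg _) fun r _ => by
          simpa [abs_of_nonneg (hu r).1] using pow_le_one₀ (hu r).1 (hu r).2
    _ = ∫ ω, Real.exp (-∑ r, (1 - u r) * Y r ω) ∂μ := by
        simp_rw [integral_prod_pow_poissonPiKernel]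
        exact integral_map (by fun_prop) (Measurable.aestronglyMeasurable (by fun_prop))

end Poisson

lemma abs_prod_sub_prod_le_sum_abs_sub {ι : Type*} (s : Finset ι) {a b : ι → ℝ}
    (ha : ∀ r ∈ s, a r ∈ Set.Icc 0 1) (hb : ∀ r ∈ s, b r ∈ Set.Icc 0 1) :
    |∏ r ∈ s, a r - ∏ r ∈ s, b r| ≤ ∑ r ∈ s, |a r - b r| := by
  induction s using Finset.cons_induction with
  | empty => simp
  | cons i s hi ih =>
    simp only [forall_mem_cons] at ha hb
    have hprod : |∏ r ∈ s, a r| ≤ 1 := by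
      rw [abs_prod]
      exact prod_le_one (fun _ _ => abs_nonneg _) fun r hr =>
        abs_le.2 ⟨by linarith [(ha.2 r hr).1], (ha.2 r hr).2⟩
    have hbi : |b i| ≤ 1 := abs_le.2 ⟨by linarith [hb.1.1], hb.1.2⟩
    rw [prod_cons, prod_cons, sum_cons]
    calc |a i * ∏ r ∈ s, a r - b i * ∏ r ∈ s, b r|
        = |(a i - b i) * ∏ r ∈ s, a r + b i * (∏ r ∈ s, a r - ∏ r ∈ s, b r)| := by
          congr 1; ring
      _ ≤ |a i - b i| * |∏ r ∈ s, a r| + |b i| * |∏ r ∈ s, a r - ∏ r ∈ s, b r| := by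
          exact (abs_add_le _ _).trans_eq (by rw [abs_mul, abs_mul])
      _ ≤ |a i - b i| * 1 + 1 * ∑ r ∈ s, |a r - b r| := by
          gcongr
          exact ih ha.2 hb.2
      _ = |a i - b i| + ∑ r ∈ s, |a r - b r| := by ring

lemma abs_one_sub_sub_exp_neg_le_sq {a : ℝ} (ha : a ∈ Set.Icc 0 1) :
    |(1 - a) - Real.exp (-a)| ≤ a ^ 2 := by
  have habs : |-a| ≤ 1 := by simpa [abs_of_nonneg ha.1] using ha.2
  have h := Real.abs_exp_sub_one_sub_id_le habs
  rw [neg_sq] at h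
  rwa [abs_sub_comm, show Real.exp (-a) - (1 - a) = Real.exp (-a) - 1 - -a by ring]

lemma abs_one_sub_pow_sub_exp_neg_le {a : ℝ} (ha : a ∈ Set.Icc 0 1) (k : ℕ) :
    |(1 - a) ^ k - Real.exp (-(a * k))| ≤ a := by
  obtain rfl | k := k
  · simpa using ha.1
  have hmax : max |1 - a| |Real.exp (-a)| = Real.exp (-a) := by
    rw [abs_of_nonneg (sub_nonneg.2 ha.2), Real.abs_exp,
      max_eq_right (Real.one_sub_le_exp_neg a)]
  have hdecay : a * (k + 1) * Real.exp (-a) ^ k ≤ 1 := calc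
    a * (k + 1) * Real.exp (-a) ^ k ≤ Real.exp (a * (k + 1) - 1) * Real.exp (-a) ^ k := by
      gcongr
      linarith [Real.add_one_le_exp (a * (k + 1) - 1)]
    _ = Real.exp (a - 1) := by
      rw [← Real.exp_nat_mul, ← Real.exp_add]; ring_nf
    _ ≤ 1 := Real.exp_le_one_iff.2 (by linarith [ha.2])
  calc |(1 - a) ^ (k + 1) - Real.exp (-(a * ((k + 1 : ℕ) : ℝ)))|
      = |(1 - a) ^ (k + 1) - Real.exp (-a) ^ (k + 1)| := by
        rw [← Real.exp_nat_mul]; ring_nf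
    _ ≤ |(1 - a) - Real.exp (-a)| * ((k + 1 : ℕ) : ℝ) * Real.exp (-a) ^ k := by
        simpa only [hmax, add_tsub_cancel_right] using
          abs_pow_sub_pow_le (1 - a) (Real.exp (-a)) (k + 1)
    _ ≤ a ^ 2 * (k + 1) * Real.exp (-a) ^ k := by
        push_cast
        gcongr
        exact abs_one_sub_sub_exp_neg_le_sq ha
    _ = a * (a * (k + 1) * Real.exp (-a) ^ k) := by ring
    _ ≤ a := mul_le_of_le_one_right ha.1 hdecay

section Thinning

variable {ι Ω : Type*} [Fintype ι] [MeasurableSpace Ω] {μ : Measure Ω}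

/-- `T` has the law of the independently thinned vector `(p r ⊙ X r)_r`, encoded by its joint
probability generating function on the unit cube. -/
structure IsThinning (μ : Measure Ω) (p : ι → ℝ) (X T : ι → Ω → ℕ) : Prop where
  measurable (r : ι) : Measurable (T r)
  integral_prod_pow (u : ι → ℝ) (hu : ∀ r, u r ∈ Set.Icc (0 : ℝ) 1) :
    ∫ ω, ∏ r, u r ^ T r ω ∂μ = ∫ ω, ∏ r, (p r * u r + (1 - p r)) ^ X r ω ∂μ

lemma abs_integral_prod_one_sub_pow_sub_integral_exp_le [IsProbabilityMeasure μ]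
    {X : ι → Ω → ℕ} (hX : ∀ r, Measurable (X r)) {a : ι → ℝ} (ha : ∀ r, a r ∈ Set.Icc 0 1) :
    |∫ ω, ∏ r, (1 - a r) ^ X r ω ∂μ - ∫ ω, Real.exp (-∑ r, a r * X r ω) ∂μ| ≤ ∑ r, a r := by
  have hpow (r : ι) (ω : Ω) : (1 - a r) ^ X r ω ∈ Set.Icc (0 : ℝ) 1 :=
    ⟨pow_nonneg (sub_nonneg.2 (ha r).2) _,
      pow_le_one₀ (sub_nonneg.2 (ha r).2) (sub_le_self 1 (ha r).1)⟩
  have hexp (r : ι) (ω : Ω) : Real.exp (-(a r * X r ω)) ∈ Set.Icc (0 : ℝ) 1 :=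
    ⟨(Real.exp_pos _).le, Real.exp_le_one_iff.2 <|
      neg_nonpos.2 (mul_nonneg (ha r).1 (Nat.cast_nonneg _))⟩
  have hint {f : ι → Ω → ℝ} (hf : ∀ r, Measurable (f r)) (hf01 : ∀ r ω, f r ω ∈ Set.Icc 0 1) :
      Integrable (fun ω => ∏ r, f r ω) μ :=
    .of_mem_Icc 0 1 (by fun_prop) <| .of_forall fun ω =>
      ⟨prod_nonneg fun r _ => (hf01 r ω).1,
        prod_le_one (fun r _ => (hf01 r ω).1) fun r _ => (hf01 r ω).2⟩
  simp_rw [← sum_neg_distrib, Real.exp_sum]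
  rw [← integral_sub (hint (by fun_prop) hpow) (hint (by fun_prop) hexp), ← Real.norm_eq_abs]
  refine (norm_integral_le_of_norm_le_const (C := ∑ r, a r) (.of_forall fun ω => ?_)).trans_eq
    (by simp)
  exact (abs_prod_sub_prod_le_sum_abs_sub _ (fun r _ => hpow r ω) fun r _ => hexp r ω).trans <|
    sum_le_sum fun r _ => abs_one_sub_pow_sub_exp_neg_le (ha r) _

lemma IsThinning.abs_integral_prod_pow_sub_integral_exp_le [IsProbabilityMeasure μ]
    {X T : ι → Ω → ℕ} {p : ι → ℝ} (h : IsThinning μ p X T) (hX : ∀ r, Measurable (X r))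
    (hp : ∀ r, p r ∈ Set.Icc 0 1) {t : ι → ℝ} (ht : ∀ r, t r ∈ Set.Icc 0 1) :
    |∫ ω, ∏ r, (1 - t r) ^ T r ω ∂μ - ∫ ω, Real.exp (-∑ r, t r * (p r * X r ω)) ∂μ|
      ≤ ∑ r, p r * t r := by
  have hpt (r : ι) : p r * t r ∈ Set.Icc (0 : ℝ) 1 :=
    ⟨mul_nonneg (hp r).1 (ht r).1, mul_le_one₀ (hp r).2 (ht r).1 (ht r).2⟩
  have hthin : ∫ ω, ∏ r, (1 - t r) ^ T r ω ∂μ = ∫ ω, ∏ r, (1 - p r * t r) ^ X r ω ∂μ := by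
    rw [h.integral_prod_pow _ fun r => ⟨sub_nonneg.2 (ht r).2, sub_le_self 1 (ht r).1⟩]
    ring_nf
  have hassoc (r : ι) (ω : Ω) : t r * (p r * X r ω) = p r * t r * X r ω := by ring
  simp_rw [hthin, hassoc]
  exact abs_integral_prod_one_sub_pow_sub_integral_exp_le hX hpt

lemma tendsto_integral_prod_pow {α : Type*} {l : Filter α} {T : α → ι → Ω → ℕ} {Z : ι → Ω → ℕ}
    (h : ∀ g : (ι → ℝ) →ᵇ ℝ, Tendsto (fun n => ∫ ω, g (fun r => (T n r ω : ℝ)) ∂μ) l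
      (𝓝 (∫ ω, g (fun r => (Z r ω : ℝ)) ∂μ)))
    {u : ι → ℝ} (hu : ∀ r, u r ∈ Set.Ioc 0 1) :
    Tendsto (fun n => ∫ ω, ∏ r, u r ^ T n r ω ∂μ) l (𝓝 (∫ ω, ∏ r, u r ^ Z r ω ∂μ)) := by
  let g : (ι → ℝ) →ᵇ ℝ := .ofNormedAddCommGroup (fun x => ∏ r, u r ^ |x r|)
    (continuous_finsetProd _ fun r _ =>
      .rpow continuous_const (by fun_prop) fun _ => .inl (hu r).1.ne') 1 fun x => by
      rw [norm_prod]
      refine prod_le_one (fun _ _ => norm_nonneg _) fun r _ => ?_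
      rw [Real.norm_of_nonneg (Real.rpow_nonneg (hu r).1.le _)]
      exact Real.rpow_le_one (hu r).1.le (hu r).2 (abs_nonneg _)
  simpa [g] using h g

end Thinning

theorem thinning_trick_general {ι Ω : Type*} [Fintype ι] [MeasurableSpace Ω] {μ : Measure Ω}
    [IsProbabilityMeasure μ] {X T : ℕ → ι → Ω → ℕ} (hX : ∀ n r, Measurable (X n r))
    {p : ℕ → ι → ℝ} (hp : ∀ n r, p n r ∈ Set.Icc 0 1)
    (hp0 : ∀ r, Tendsto (fun n => p n r) atTop (𝓝 0))
    (hT : ∀ n, IsThinning μ (p n) (X n) (T n))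
    {Y : ι → Ω → ℝ} (hY : ∀ r, Measurable (Y r)) (hY0 : ∀ r ω, 0 ≤ Y r ω)
    {Z : ι → Ω → ℕ} (hZ : ∀ r, Measurable (Z r)) (hYZ : IsMixedPoisson μ Y Z)
    (hTZ : ∀ g : (ι → ℝ) →ᵇ ℝ, Tendsto (fun n => ∫ ω, g (fun r => (T n r ω : ℝ)) ∂μ) atTop
      (𝓝 (∫ ω, g (fun r => (Z r ω : ℝ)) ∂μ)))
    (g : (ι → ℝ) →ᵇ ℝ) :
    Tendsto (fun n => ∫ ω, g (fun r => p n r * (X n r ω : ℝ)) ∂μ) atTop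
      (𝓝 (∫ ω, g (fun r => Y r ω) ∂μ)) := by
  refine tendsto_integral_comp_of_tendsto_integral_exp (by fun_prop)
    (fun n r ω => mul_nonneg (hp n r).1 (Nat.cast_nonneg _)) hY hY0 ?_ g
  have hsmall : ∀ᶠ t : ι → ℝ≥0 in 𝓝 0, ∀ r, t r < 1 :=
    eventually_all.2 fun r => (continuous_apply r).continuousAt.eventually_lt_const one_pos
  filter_upwards [hsmall] with t ht
  have hu (r : ι) : 1 - (t r : ℝ) ∈ Set.Ioc 0 1 :=
    ⟨sub_pos.2 (mod_cast ht r), sub_le_self 1 (t r).2⟩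
  have hpgf := tendsto_integral_prod_pow hTZ hu
  rw [hYZ.integral_prod_pow hY hY0 hZ fun r => Set.Ioc_subset_Icc_self (hu r)] at hpgf
  simp only [sub_sub_cancel] at hpgf
  have herror : Tendsto (fun n => ∑ r, p n r * t r) atTop (𝓝 0) := by
    simpa using tendsto_finsetSum univ fun r _ => (hp0 r).mul_const (t r : ℝ)
  refine hpgf.congr_dist (squeeze_zero (fun _ => dist_nonneg) (fun n => ?_) herror)
  exact (hT n).abs_integral_prod_pow_sub_integral_exp_le (hX n) (hp n)
    fun r => ⟨(t r).2, mod_cast (ht r).le⟩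

/-- The multidimensional thinning-trick limit theorem: if the Bernoulli-thinned
vectors `(p_r^(n) ⊙ X_r^(n))_{r≤s}` (realized as `T n`, characterized by their
joint pgf) converge in distribution to a multivariate mixed Poisson vector `Z`
with mixing vector `Y`, `p_r^(n) → 0`, and `sup_n p_r^(n) E[X_r^(n)] < ∞`, then
`(p_r^(n) X_r^(n))_{r≤s}` converges in distribution to `Y`. -/
theorem thinning_trick
    (s : ℕ)
    {Ω : Type*} [MeasurableSpace Ω] (μ : Measure Ω) [IsProbabilityMeasure μ]
    (X : ℕ → Fin s → Ω → ℕ) (hXmeas : ∀ n r, Measurable (X n r))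
    (p : ℕ → Fin s → ℝ) (hp01 : ∀ n r, p n r ∈ Set.Icc (0 : ℝ) 1)
    (hp0 : ∀ r, Filter.Tendsto (fun n => p n r) Filter.atTop (nhds 0))
    -- `T n` realizes the thinned vector `(p_1^(n) ⊙ X_1^(n), …, p_s^(n) ⊙ X_s^(n))`,
    -- characterized in distribution by its joint probability generating function:
    (T : ℕ → Fin s → Ω → ℕ) (hTmeas : ∀ n r, Measurable (T n r))
    (hTthin : ∀ n, ∀ u : Fin s → ℝ, (∀ r, u r ∈ Set.Icc (0 : ℝ) 1) →
      ∫ ω, ∏ r, (u r) ^ (T n r ω) ∂μ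
        = ∫ ω, ∏ r, (p n r * u r + (1 - p n r)) ^ (X n r ω) ∂μ)
    -- `Z` is multivariate mixed Poisson with mixing vector `Y`:
    (Y : Fin s → Ω → ℝ) (hYmeas : ∀ r, Measurable (Y r)) (hYnn : ∀ r ω, 0 ≤ Y r ω)
    (Z : Fin s → Ω → ℕ) (hZmeas : ∀ r, Measurable (Z r))
    (hmix : ∀ k : Fin s → ℕ, μ {ω | ∀ r, Z r ω = k r}
      = ENNReal.ofReal (∫ ω, ∏ r,
          Real.exp (-(Y r ω)) * (Y r ω) ^ (k r) / (Nat.factorial (k r) : ℝ) ∂μ))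
    -- convergence in distribution of the thinned vectors to `Z`:
    (hconv : ∀ g : BoundedContinuousFunction (Fin s → ℝ) ℝ,
      Filter.Tendsto (fun n => ∫ ω, g (fun r => (T n r ω : ℝ)) ∂μ)
        Filter.atTop (nhds (∫ ω, g (fun r => (Z r ω : ℝ)) ∂μ)))
    -- uniform first-moment condition `sup_n p_r^(n) E[X_r^(n)] < ∞`:
    (hint : ∀ n r, Integrable (fun ω => (X n r ω : ℝ)) μ)
    (hmom : ∀ r, ∃ C : ℝ, ∀ n, p n r * ∫ ω, (X n r ω : ℝ) ∂μ ≤ C) :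
    -- conclusion: convergence in distribution of the normalized vectors to `Y`
    ∀ g : BoundedContinuousFunction (Fin s → ℝ) ℝ,
      Filter.Tendsto (fun n => ∫ ω, g (fun r => p n r * (X n r ω : ℝ)) ∂μ)
        Filter.atTop (nhds (∫ ω, g (fun r => Y r ω) ∂μ)) :=
  thinning_trick_general hXmeas hp01 hp0 (fun n => ⟨hTmeas n, hTthin n⟩)
    hYmeas hYnn hZmeas hmix hconv
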